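/- Let C = ⟨A, B, Q, q0, D, δ, dist, ℕ, col⟩ be a finite stochastic concurrent arena that is locally determined, whose coloring col : Q × Q → ℕ takes values in the interval ⟦m, n⟧ for some m ≤ n. Let W_par := {ρ ∈ ℕ^ω | ρ takes only finitely many values and the greatest value occurring infinitely often in ρ is even} (the parity objective). Then the game ⟨C, W_par⟩ is positionally determined: there exist positional color strategies s_A (a map Q → A) and s_B (a map Q → B) such that inf over all state strategies t_B of P^{s_A, t_B}(U_{W_par}) = sup over all state strategies t_A of P^{t_A, s_B}(U_{W_par}); consequently val_A = val_B equals this common value, and s_A, s_B are optimal. -/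

import Mathlib

open MeasureTheory
open scoped Classical ENNReal

universe u

/-- The cylinder set generated by a finite word. -/
def Cyl {K : Type u} (w : List K) : Set (ℕ → K) :=
  {ρ | ∀ i : ℕ, ∀ h : i < w.length, ρ i = w.get ⟨i, h⟩}

/-- The σ-algebra on `ℕ → K` generated by cylinder sets. -/
def BorelSeq (K : Type u) : MeasurableSpace (ℕ → K) :=
  MeasurableSpace.generateFrom {s | ∃ w : List K, s = Cyl w}

/-- A game form (given by its outcome function `ρ : S_A → S_B → O`) is determined. -/
def GFDetermined {SA SB O : Type u} (ρ : SA → SB → O) : Prop :=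
  ∀ V : Set O, (∃ a, ∀ b, ρ a b ∈ V) ∨ (∃ b, ∀ a, ρ a b ∉ V)

/-- The color sequence of an infinite play. -/
def colorSeq {Q K : Type u} (col : Q → Q → K) (π : ℕ → Q) : ℕ → K :=
  fun n => col (π n) (π (n + 1))

/-- The color history along the state history `h ++ [q]`. -/
def colHist {Q K : Type u} (col : Q → Q → K) : List Q → Q → List K
  | [], _ => []
  | [p], q => [col p q]
  | p :: p' :: r, q => col p p' :: colHist col (p' :: r) q

/-- The (deterministic) state strategy induced by a color strategy of Player A:
after state history `h` with current state `q`, play `sA` applied to the color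
history and the current state. -/
noncomputable def toStratA {A Q K : Type u} (col : Q → Q → K)
    (sA : List K → Q → A) : List Q → Q → PMF A :=
  fun h q => PMF.pure (sA (colHist col h q) q)

/-- The (deterministic) state strategy induced by a color strategy of Player B. -/
noncomputable def toStratB {B Q K : Type u} (col : Q → Q → K)
    (sB : List K → Q → B) : List Q → Q → PMF B :=
  fun h q => PMF.pure (sB (colHist col h q) q)

/-- The strict history `π_0 ⋯ π_{i-1}` before step `i` of a finite play
`π : Fin (k+1) → Q`. -/
def histOf {Q : Type u} {k : ℕ} (π : Fin (k + 1) → Q) (i : Fin k) : List Q :=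
  List.ofFn (fun j : Fin (i : ℕ) => π (Fin.castLE (Nat.le_succ_of_le i.isLt.le) j))

/-- The set of plays whose color sequence lies in `W`. -/
def UW {Q K : Type u} (col : Q → Q → K) (W : Set (ℕ → K)) : Set (ℕ → Q) :=
  {π | colorSeq col π ∈ W}

/-- The value of Player A's color strategy `sA`: the infimum over Player B's state
strategies of the probability of `U`. -/
noncomputable def valSA {A B Q K : Type u} (col : Q → Q → K)
    (P : (List Q → Q → PMF A) → (List Q → Q → PMF B) →
      @Measure (ℕ → Q) (BorelSeq Q))
    (U : Set (ℕ → Q)) (sA : List K → Q → A) : ℝ≥0∞ :=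
  ⨅ tB : List Q → Q → PMF B, P (toStratA col sA) tB U

/-- The value of Player B's color strategy `sB`: the supremum over Player A's state
strategies of the probability of `U`. -/
noncomputable def valSB {A B Q K : Type u} (col : Q → Q → K)
    (P : (List Q → Q → PMF A) → (List Q → Q → PMF B) →
      @Measure (ℕ → Q) (BorelSeq Q))
    (U : Set (ℕ → Q)) (sB : List K → Q → B) : ℝ≥0∞ :=
  ⨆ tA : List Q → Q → PMF A, P tA (toStratB col sB) U

/-- The value of the game for Player A. -/
noncomputable def valA {A B Q K : Type u} (col : Q → Q → K)
    (P : (List Q → Q → PMF A) → (List Q → Q → PMF B) →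
      @Measure (ℕ → Q) (BorelSeq Q))
    (U : Set (ℕ → Q)) : ℝ≥0∞ :=
  ⨆ sA : List K → Q → A, valSA col P U sA

/-- The value of the game for Player B. -/
noncomputable def valB {A B Q K : Type u} (col : Q → Q → K)
    (P : (List Q → Q → PMF A) → (List Q → Q → PMF B) →
      @Measure (ℕ → Q) (BorelSeq Q))
    (U : Set (ℕ → Q)) : ℝ≥0∞ :=
  ⨅ sB : List K → Q → B, valSB col P U sB

/-- The value `c` occurs infinitely often in `ρ`. -/
def InfOccur (ρ : ℕ → ℕ) (c : ℕ) : Prop := ∀ N : ℕ, ∃ j : ℕ, N ≤ j ∧ ρ j = c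

/-- The parity objective: sequences taking finitely many values whose greatest
value occurring infinitely often is even. -/
def Wpar : Set (ℕ → ℕ) :=
  {ρ | (Set.range ρ).Finite ∧
    ∃ c : ℕ, InfOccur ρ c ∧ (∀ c', InfOccur ρ c' → c' ≤ c) ∧ Even c}

/-!
Let the run stop at each color `c` with probability `ε c`, the reward on stopping being `1` if `c`
is even and `0` otherwise, and pay a run that never stops by the parity objective. If every color
has a positive rate, the one-step payoff is a contraction in the continuation values; the local
interactions being determined, its fixed point yields positional optimal strategies, as in
Shapley's theorem. Now let the rates tend to `0` one color at a time, from the least color upwards.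
On each play the payoff is continuous along these limits: if some color that keeps a positive rate
recurs, the run stops almost surely in the limit as well, and otherwise the reward at the greatest
recurring color is that of the parity objective. A positional saddle point survives each limit, as
there are only finitely many pairs of positional strategies, and once all rates vanish the payoff
is the parity objective itself.
-/

open Filter Topology

/-! ### Stopped reward sequences -/

section StoppedReward

/-- The probability of not having stopped before step `N`, when step `i` stops with
probability `x i`. -/
def survival (x : ℕ → ℝ) (N : ℕ) : ℝ :=
  ∏ i ∈ Finset.range N, (1 - x i)

/-- The expected reward of a run that stops at step `i` with probability `x i` and reward `y i`,
and receives `w` if it has not stopped before step `N`. -/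
def stopValue (x y : ℕ → ℝ) (w : ℝ) (N : ℕ) : ℝ :=
  ∑ i ∈ Finset.range N, survival x i * (x i * y i) + survival x N * w

/-- The expected reward of a run that stops at step `i` with probability `x i` and reward `y i`,
and receives `w` if it never stops. The limit exists when the probabilities and rewards lie in
`[0, 1]`, see `tendsto_stopValue`. -/
noncomputable def stopPayoff (x y : ℕ → ℝ) (w : ℝ) : ℝ :=
  limUnder atTop (stopValue x y w)

variable {x y : ℕ → ℝ} {w : ℝ}

theorem survival_succ (x : ℕ → ℝ) (N : ℕ) : survival x (N + 1) = survival x N * (1 - x N) :=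
  Finset.prod_range_succ _ N

theorem stopValue_zero (x y : ℕ → ℝ) (w : ℝ) : stopValue x y w 0 = w := by
  simp [stopValue, survival]

theorem stopValue_succ (x y : ℕ → ℝ) (w w' : ℝ) (N : ℕ) :
    stopValue x y w' (N + 1) =
      stopValue x y w N + survival x N * (x N * y N + (1 - x N) * w' - w) := by
  simp only [stopValue, survival_succ, Finset.sum_range_succ]
  ring

theorem stopValue_eq_add (x y : ℕ → ℝ) (w w' : ℝ) (N : ℕ) :
    stopValue x y w N = stopValue x y w' N + survival x N * (w - w') := by
  simp only [stopValue]
  ring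

theorem survival_congr {x' : ℕ → ℝ} {N : ℕ} (h : ∀ i < N, x i = x' i) :
    survival x N = survival x' N :=
  Finset.prod_congr rfl fun i hi => by rw [h i (Finset.mem_range.1 hi)]

theorem stopValue_congr {x' y' : ℕ → ℝ} {N : ℕ} (hx : ∀ i < N, x i = x' i)
    (hy : ∀ i < N, y i = y' i) (w : ℝ) : stopValue x y w N = stopValue x' y' w N := by
  unfold stopValue
  rw [survival_congr hx]
  congr 1
  refine Finset.sum_congr rfl fun i hi => ?_
  have hi := Finset.mem_range.1 hi
  rw [survival_congr fun j hj => hx j (hj.trans hi), hx i hi, hy i hi]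

theorem survival_nonneg (hx : ∀ i, x i ∈ Set.Icc 0 1) (N : ℕ) : 0 ≤ survival x N :=
  Finset.prod_nonneg fun i _ => sub_nonneg.2 (hx i).2

theorem survival_antitone (hx : ∀ i, x i ∈ Set.Icc 0 1) : Antitone (survival x) := by
  refine antitone_nat_of_succ_le fun N => ?_
  rw [survival_succ]
  exact mul_le_of_le_one_right (survival_nonneg hx N) (sub_le_self 1 (hx N).1)

theorem survival_le_one (hx : ∀ i, x i ∈ Set.Icc 0 1) (N : ℕ) : survival x N ≤ 1 := by
  simpa [survival] using survival_antitone hx N.zero_le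

theorem stopValue_mono_terminal (hx : ∀ i, x i ∈ Set.Icc 0 1) (N : ℕ) :
    Monotone fun w => stopValue x y w N := fun _ _ h =>
  add_le_add_right (mul_le_mul_of_nonneg_left h (survival_nonneg hx N)) _

theorem stopValue_zero_terminal_monotone (hx : ∀ i, x i ∈ Set.Icc 0 1) (hy : ∀ i, 0 ≤ y i) :
    Monotone (stopValue x y 0) := by
  refine monotone_nat_of_le_succ fun N => ?_
  rw [stopValue_succ x y 0 0 N, mul_zero, add_zero, sub_zero]
  exact le_add_of_nonneg_right <|
    mul_nonneg (survival_nonneg hx N) (mul_nonneg (hx N).1 (hy N))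

theorem stopValue_one_terminal_antitone (hx : ∀ i, x i ∈ Set.Icc 0 1) (hy : ∀ i, y i ≤ 1) :
    Antitone (stopValue x y 1) := by
  refine antitone_nat_of_succ_le fun N => ?_
  rw [stopValue_succ x y 1 1 N]
  refine add_le_of_nonpos_right (mul_nonpos_of_nonneg_of_nonpos (survival_nonneg hx N) ?_)
  linarith [mul_le_of_le_one_right (hx N).1 (hy N)]

theorem stopValue_mem_Icc (hx : ∀ i, x i ∈ Set.Icc 0 1) (hy : ∀ i, y i ∈ Set.Icc 0 1)
    (hw : w ∈ Set.Icc 0 1) (N : ℕ) : stopValue x y w N ∈ Set.Icc 0 1 := by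
  constructor
  · calc (0 : ℝ) = stopValue x y 0 0 := (stopValue_zero x y 0).symm
      _ ≤ stopValue x y 0 N := stopValue_zero_terminal_monotone hx (fun i => (hy i).1) N.zero_le
      _ ≤ stopValue x y w N := stopValue_mono_terminal hx N hw.1
  · calc stopValue x y w N ≤ stopValue x y 1 N := stopValue_mono_terminal hx N hw.2
      _ ≤ stopValue x y 1 0 := stopValue_one_terminal_antitone hx (fun i => (hy i).2) N.zero_le
      _ = 1 := stopValue_zero x y 1

theorem abs_stopValue_le (hx : ∀ i, x i ∈ Set.Icc 0 1) (hy : ∀ i, y i ∈ Set.Icc 0 1) (w : ℝ)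
    (N : ℕ) : |stopValue x y w N| ≤ 1 + |w| := by
  have h0 := stopValue_mem_Icc hx hy (Set.left_mem_Icc.2 zero_le_one) N
  rw [stopValue_eq_add x y w 0 N, sub_zero]
  refine (abs_add_le _ _).trans (add_le_add ?_ ?_)
  · exact (abs_of_nonneg h0.1).trans_le h0.2
  · rw [abs_mul, abs_of_nonneg (survival_nonneg hx N)]
    exact mul_le_of_le_one_left (abs_nonneg w) (survival_le_one hx N)

theorem tendsto_stopValue (hx : ∀ i, x i ∈ Set.Icc 0 1) (hy : ∀ i, y i ∈ Set.Icc 0 1) (w : ℝ) :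
    Tendsto (stopValue x y w) atTop (𝓝 (stopPayoff x y w)) := by
  have hvalue : Tendsto (stopValue x y 0) atTop (𝓝 (⨆ N, stopValue x y 0 N)) :=
    tendsto_atTop_ciSup (stopValue_zero_terminal_monotone hx fun i => (hy i).1)
      ⟨1, by rintro _ ⟨N, rfl⟩; exact (stopValue_mem_Icc hx hy (by simp) N).2⟩
  have hsurvival : Tendsto (survival x) atTop (𝓝 (⨅ N, survival x N)) :=
    tendsto_atTop_ciInf (survival_antitone hx)
      ⟨0, by rintro _ ⟨N, rfl⟩; exact survival_nonneg hx N⟩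
  refine tendsto_nhds_limUnder ⟨_, (hvalue.add (hsurvival.mul_const (w - 0))).congr fun N => ?_⟩
  exact (stopValue_eq_add x y w 0 N).symm

theorem stopPayoff_mem_Icc (hx : ∀ i, x i ∈ Set.Icc 0 1) (hy : ∀ i, y i ∈ Set.Icc 0 1)
    (hw : w ∈ Set.Icc 0 1) : stopPayoff x y w ∈ Set.Icc 0 1 :=
  isClosed_Icc.mem_of_tendsto (tendsto_stopValue hx hy w)
    (Eventually.of_forall (stopValue_mem_Icc hx hy hw))

theorem stopValue_zero_terminal_le_stopPayoff (hx : ∀ i, x i ∈ Set.Icc 0 1)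
    (hy : ∀ i, y i ∈ Set.Icc 0 1) (hw : 0 ≤ w) (N : ℕ) :
    stopValue x y 0 N ≤ stopPayoff x y w :=
  ge_of_tendsto (tendsto_stopValue hx hy w) <| (eventually_ge_atTop N).mono fun M hM =>
    (stopValue_zero_terminal_monotone hx (fun i => (hy i).1) hM).trans
      (stopValue_mono_terminal hx M hw)

theorem stopPayoff_le_stopValue_one_terminal (hx : ∀ i, x i ∈ Set.Icc 0 1)
    (hy : ∀ i, y i ∈ Set.Icc 0 1) (hw : w ≤ 1) (N : ℕ) :
    stopPayoff x y w ≤ stopValue x y 1 N :=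
  le_of_tendsto (tendsto_stopValue hx hy w) <| (eventually_ge_atTop N).mono fun M hM =>
    (stopValue_mono_terminal hx M hw).trans
      (stopValue_one_terminal_antitone hx (fun i => (hy i).2) hM)

theorem stopPayoff_eq_stopValue {N : ℕ} (h : ∀ i, N ≤ i → x i = 0 ∨ y i = w) :
    stopPayoff x y w = stopValue x y w N := by
  have hstable : ∀ M, N ≤ M → stopValue x y w M = stopValue x y w N := fun M hM => by
    induction M, hM using Nat.le_induction with
    | base => rfl
    | succ M hM ih =>
      have hzero : x M * y M + (1 - x M) * w - w = 0 := by
        rcases h M hM with h | h <;> rw [h] <;> ring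
      rw [stopValue_succ x y w w M, hzero, mul_zero, add_zero, ih]
  exact (tendsto_const_nhds.congr' <|
    (eventually_ge_atTop N).mono fun M hM => (hstable M hM).symm).limUnder_eq

theorem tendsto_survival_zero (hx : ∀ i, x i ∈ Set.Icc 0 1) {θ : ℝ} (hθ : 0 < θ)
    (h : ∃ᶠ i in atTop, θ ≤ x i) : Tendsto (survival x) atTop (𝓝 0) := by
  have hθ1 : θ ≤ 1 := let ⟨i, hi⟩ := h.exists; hi.trans (hx i).2
  have hpow : ∀ k : ℕ, ∃ N, survival x N ≤ (1 - θ) ^ k := fun k => by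
    induction k with
    | zero => exact ⟨0, by simp [survival]⟩
    | succ k ih =>
      obtain ⟨N, hN⟩ := ih
      obtain ⟨i, hNi, hi⟩ := frequently_atTop.1 h N
      refine ⟨i + 1, ?_⟩
      rw [survival_succ, pow_succ]
      exact mul_le_mul ((survival_antitone hx hNi).trans hN) (sub_le_sub_left hi 1)
        (sub_nonneg.2 (hx i).2) (pow_nonneg (sub_nonneg.2 hθ1) k)
  refine tendsto_order.2 ⟨fun a ha => Eventually.of_forall fun N =>
    ha.trans_le (survival_nonneg hx N), fun a ha => ?_⟩
  obtain ⟨k, hk⟩ := exists_pow_lt_of_lt_one ha (sub_lt_self 1 hθ)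
  obtain ⟨N, hN⟩ := hpow k
  exact (eventually_ge_atTop N).mono fun M hM =>
    ((survival_antitone hx hM).trans hN).trans_lt hk

theorem tendsto_stopValue_of_survival_zero (hx : ∀ i, x i ∈ Set.Icc 0 1)
    (hy : ∀ i, y i ∈ Set.Icc 0 1) (hs : Tendsto (survival x) atTop (𝓝 0)) {u : ℕ → ℝ} {C : ℝ}
    (hu : ∀ N, |u N| ≤ C) (w : ℝ) :
    Tendsto (fun N => stopValue x y (u N) N) atTop (𝓝 (stopPayoff x y w)) := by
  have hterminal : Tendsto (fun N => survival x N * (u N - w)) atTop (𝓝 0) := by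
    refine hs.zero_mul_isBoundedUnder_le (isBoundedUnder_of ⟨C + |w|, fun N => ?_⟩)
    exact (abs_sub _ _).trans (add_le_add_left (hu N) _)
  simpa only [add_zero, ← stopValue_eq_add] using (tendsto_stopValue hx hy w).add hterminal

theorem continuous_stopValue (y : ℕ → ℝ) (w : ℝ) (N : ℕ) :
    Continuous fun x : ℕ → ℝ => stopValue x y w N := by
  unfold stopValue survival
  fun_prop

-- The bounds `stopValue · y 0 N ≤ stopPayoff · y w ≤ stopValue · y 1 N` are continuous in the
-- rates and, at `x`, become tight as `N → ∞`.
theorem tendsto_stopPayoff_of_survival_zero {ι : Type*} {l : Filter ι} {xs : ι → ℕ → ℝ}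
    (hxs : ∀ᶠ k in l, ∀ i, xs k i ∈ Set.Icc 0 1) (hx : ∀ i, x i ∈ Set.Icc 0 1)
    (hy : ∀ i, y i ∈ Set.Icc 0 1) (hw : w ∈ Set.Icc 0 1) (hlim : Tendsto xs l (𝓝 x))
    (hs : Tendsto (survival x) atTop (𝓝 0)) :
    Tendsto (fun k => stopPayoff (xs k) y w) l (𝓝 (stopPayoff x y w)) := by
  have htight : ∀ u : ℝ, Tendsto (stopValue x y u) atTop (𝓝 (stopPayoff x y w)) := fun u =>
    tendsto_stopValue_of_survival_zero hx hy hs (u := fun _ => u) (fun _ => le_rfl) w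
  have hcont : ∀ u N, Tendsto (fun k => stopValue (xs k) y u N) l (𝓝 (stopValue x y u N)) :=
    fun u N => (continuous_stopValue y u N).tendsto x |>.comp hlim
  refine tendsto_order.2 ⟨fun a ha => ?_, fun b hb => ?_⟩
  · obtain ⟨N, hN⟩ := ((htight 0).eventually_const_lt ha).exists
    filter_upwards [hxs, (hcont 0 N).eventually_const_lt hN] with k hxk hk
    exact hk.trans_le (stopValue_zero_terminal_le_stopPayoff hxk hy hw.1 N)
  · obtain ⟨N, hN⟩ := ((htight 1).eventually_lt_const hb).exists
    filter_upwards [hxs, (hcont 1 N).eventually_lt_const hN] with k hxk hk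
    exact (stopPayoff_le_stopValue_one_terminal hxk hy hw.2 N).trans_lt hk

theorem measurable_stopValue {Ω : Type*} [MeasurableSpace Ω] {x y : Ω → ℕ → ℝ} {w : Ω → ℝ}
    (hx : Measurable x) (hy : Measurable y) (hw : Measurable w) (N : ℕ) :
    Measurable fun ω => stopValue (x ω) (y ω) (w ω) N := by
  unfold stopValue survival
  fun_prop

theorem measurable_stopPayoff {Ω : Type*} [MeasurableSpace Ω] {x y : Ω → ℕ → ℝ} {w : Ω → ℝ}
    (hxm : Measurable x) (hym : Measurable y) (hwm : Measurable w)
    (hx : ∀ ω i, x ω i ∈ Set.Icc 0 1) (hy : ∀ ω i, y ω i ∈ Set.Icc 0 1) :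
    Measurable fun ω => stopPayoff (x ω) (y ω) (w ω) :=
  measurable_of_tendsto_metrizable (measurable_stopValue hxm hym hwm)
    (tendsto_pi_nhds.2 fun ω => tendsto_stopValue (hx ω) (hy ω) (w ω))

end StoppedReward

/-! ### Parity objective and discounted payoffs -/

section ParityPayoff

theorem exists_frequently_eq_eventually_le {ρ : ℕ → ℕ} (hρ : (Set.range ρ).Finite) :
    ∃ c, (∃ᶠ i in atTop, ρ i = c) ∧ ∀ᶠ i in atTop, ρ i ≤ c := by
  obtain ⟨M, hM⟩ := hρ.bddAbove
  have hbounded : ∃ c, ∀ᶠ i in atTop, ρ i ≤ c := ⟨M, Eventually.of_forall fun i => hM ⟨i, rfl⟩⟩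
  refine ⟨Nat.find hbounded, fun hne => ?_, Nat.find_spec hbounded⟩
  obtain ⟨i, hi, hi'⟩ := (hne.and (Nat.find_spec hbounded)).exists
  have hpred : ∀ᶠ i in atTop, ρ i ≤ Nat.find hbounded - 1 := by
    filter_upwards [hne, Nat.find_spec hbounded] with i hi hi'
    omega
  have := Nat.find_min' hbounded hpred
  omega

theorem infOccur_iff_frequently {ρ : ℕ → ℕ} {c : ℕ} :
    InfOccur ρ c ↔ ∃ᶠ i in atTop, ρ i = c :=
  frequently_atTop.symm

theorem mem_Wpar_iff_even {ρ : ℕ → ℕ} (hρ : (Set.range ρ).Finite) {c : ℕ}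
    (hc : ∃ᶠ i in atTop, ρ i = c) (hle : ∀ᶠ i in atTop, ρ i ≤ c) : ρ ∈ Wpar ↔ Even c := by
  have hmax : ∀ c', InfOccur ρ c' → c' ≤ c := fun c' h =>
    let ⟨_, hi, hi'⟩ := ((infOccur_iff_frequently.1 h).and_eventually hle).exists
    hi ▸ hi'
  constructor
  · rintro ⟨-, d, hd, hdmax, heven⟩
    rwa [le_antisymm (hdmax c (infOccur_iff_frequently.2 hc)) (hmax d hd)]
  · exact fun heven => ⟨hρ, c, infOccur_iff_frequently.2 hc, hmax, heven⟩

theorem measurableSet_Wpar : MeasurableSet Wpar := by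
  have hcoord : ∀ (i : ℕ) (p : ℕ → Prop), Measurable fun ρ : ℕ → ℕ => p (ρ i) := fun i p =>
    (measurable_from_top (f := p)).comp (measurable_pi_apply i)
  have hfinite : Measurable fun ρ : ℕ → ℕ => (Set.range ρ).Finite := by
    simp only [Set.finite_iff_bddAbove, bddAbove_def, Set.forall_mem_range]
    exact .exists fun M => .forall fun i => hcoord i (· ≤ M)
  have hoccur : ∀ c, Measurable fun ρ : ℕ → ℕ => InfOccur ρ c := fun c =>
    .forall fun N => .exists fun i => measurable_const.and (hcoord i (· = c))
  have hmax : ∀ c, Measurable fun ρ : ℕ → ℕ => ∀ c', InfOccur ρ c' → c' ≤ c := fun c =>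
    .forall fun c' => (hoccur c').imp measurable_const
  exact measurableSet_setOfPred.2 <|
    hfinite.and <| .exists fun c => (hoccur c).and ((hmax c).and measurable_const)

/-- The reward of a run that stops at color `c`. -/
def evenReward (c : ℕ) : ℝ :=
  if Even c then 1 else 0

/-- The payoff interpolating between the parity objective (`ε = 0`) and a discounted objective:
the run stops at color `c` with probability `ε c` and is then paid by the parity of `c`, and a run
that never stops is paid by the parity objective. -/
noncomputable def parityPayoff (ε : ℕ → ℝ) (ρ : ℕ → ℕ) : ℝ :=
  stopPayoff (ε ∘ ρ) (evenReward ∘ ρ) (Wpar.indicator 1 ρ)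

variable {ε : ℕ → ℝ} {ρ : ℕ → ℕ}

theorem evenReward_mem_Icc (c : ℕ) : evenReward c ∈ Set.Icc 0 1 := by
  unfold evenReward
  split_ifs <;> simp

theorem indicator_Wpar_mem_Icc (ρ : ℕ → ℕ) : Wpar.indicator 1 ρ ∈ Set.Icc (0 : ℝ) 1 := by
  by_cases h : ρ ∈ Wpar <;> simp [h]

theorem parityPayoff_mem_Icc (hε : ∀ c, ε c ∈ Set.Icc 0 1) (ρ : ℕ → ℕ) :
    parityPayoff ε ρ ∈ Set.Icc 0 1 :=
  stopPayoff_mem_Icc (fun i => hε (ρ i)) (fun i => evenReward_mem_Icc (ρ i))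
    (indicator_Wpar_mem_Icc ρ)

theorem measurable_parityPayoff (hε : ∀ c, ε c ∈ Set.Icc 0 1) : Measurable (parityPayoff ε) := by
  have hcomp : ∀ f : ℕ → ℝ, Measurable fun ρ : ℕ → ℕ => f ∘ ρ := fun f =>
    measurable_pi_lambda _ fun i => measurable_from_top.comp (measurable_pi_apply i)
  exact measurable_stopPayoff (hcomp ε) (hcomp evenReward)
    (measurable_one.indicator measurableSet_Wpar) (fun ρ i => hε (ρ i))
    fun ρ i => evenReward_mem_Icc (ρ i)

theorem parityPayoff_eq_indicator (h : ∀ i, ε (ρ i) = 0) :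
    parityPayoff ε ρ = Wpar.indicator 1 ρ :=
  (stopPayoff_eq_stopValue fun i (_ : 0 ≤ i) => .inl (h i)).trans (stopValue_zero _ _ _)

/-- The stopping rates `ε` are active exactly on the colors `c ≥ j`. -/
def DiscountsFrom (j : ℕ) (ε : ℕ → ℝ) : Prop :=
  (∀ c < j, ε c = 0) ∧ ∀ c, j ≤ c → ε c ∈ Set.Ioc 0 1

theorem DiscountsFrom.mem_Icc {j : ℕ} (hε : DiscountsFrom j ε) (c : ℕ) : ε c ∈ Set.Icc 0 1 := by
  rcases lt_or_ge c j with h | h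
  · simp [hε.1 c h]
  · exact Set.Ioc_subset_Icc_self (hε.2 c h)

theorem DiscountsFrom.update {j : ℕ} (hε : DiscountsFrom (j + 1) ε) {t : ℝ}
    (ht : t ∈ Set.Ioc 0 1) : DiscountsFrom j (Function.update ε j t) := by
  refine ⟨fun c hc => ?_, fun c hc => ?_⟩
  · rw [Function.update_of_ne hc.ne]
    exact hε.1 c (Nat.lt_succ_of_lt hc)
  · rcases hc.eq_or_lt with rfl | hc
    · rwa [Function.update_self]
    · rw [Function.update_of_ne hc.ne']
      exact hε.2 c hc

theorem exists_discountsFrom (j : ℕ) : ∃ ε, DiscountsFrom j ε :=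
  ⟨fun c => if c < j then 0 else 1, fun _ hc => if_pos hc, fun c hc => by simp [hc.not_gt]⟩

-- If the greatest recurring color `c` is at most `j`, then eventually the play either sees a color
-- that does not stop it or sees `c`, whose reward is the terminal payoff.
theorem parityPayoff_eq_stopValue {j c N : ℕ} (hε : ∀ c < j, ε c = 0)
    (hρ : (Set.range ρ).Finite) (hc : ∃ᶠ i in atTop, ρ i = c) (hN : ∀ i, N ≤ i → ρ i ≤ c)
    (hcj : c ≤ j) :
    parityPayoff ε ρ = stopValue (ε ∘ ρ) (evenReward ∘ ρ) (Wpar.indicator 1 ρ) N := by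
  refine stopPayoff_eq_stopValue fun i hi => ?_
  rcases (hN i hi).lt_or_eq with h | h
  · exact .inl (hε _ (h.trans_le hcj))
  · refine .inr ?_
    simp only [Function.comp_apply, h, evenReward, Set.indicator_apply,
      mem_Wpar_iff_even hρ hc (eventually_atTop.2 ⟨N, hN⟩), Pi.one_apply]

theorem tendsto_parityPayoff_update {j : ℕ} (hε : DiscountsFrom (j + 1) ε)
    (hρ : (Set.range ρ).Finite) :
    Tendsto (fun t => parityPayoff (Function.update ε j t) ρ) (𝓝[>] 0) (𝓝 (parityPayoff ε ρ)) := by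
  have hdiscounts : ∀ᶠ t : ℝ in 𝓝[>] 0, DiscountsFrom j (Function.update ε j t) :=
    (eventually_mem_set.2 (Ioc_mem_nhdsGT one_pos)).mono fun t ht => hε.update ht
  have hrates : Tendsto (fun t => Function.update ε j t ∘ ρ) (𝓝[>] 0) (𝓝 (ε ∘ ρ)) := by
    have hcont : Continuous fun t => Function.update ε j t ∘ ρ := by
      simp only [Function.comp_def]
      fun_prop
    have hzero : Function.update ε j 0 = ε :=
      Function.update_eq_self_iff.2 (hε.1 j j.lt_succ_self).symm
    simpa only [hzero] using (hcont.tendsto 0).mono_left nhdsWithin_le_nhds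
  obtain ⟨c, hc, hle⟩ := exists_frequently_eq_eventually_le hρ
  rcases le_or_gt c j with hcj | hcj
  · obtain ⟨N, hN⟩ := eventually_atTop.1 hle
    rw [parityPayoff_eq_stopValue (fun d hd => hε.1 d (Nat.lt_succ_of_lt hd)) hρ hc hN hcj]
    refine (((continuous_stopValue _ _ N).tendsto _).comp hrates).congr' ?_
    filter_upwards [hdiscounts] with t ht
    exact (parityPayoff_eq_stopValue ht.1 hρ hc hN hcj).symm
  · refine tendsto_stopPayoff_of_survival_zero (hdiscounts.mono fun t ht i => ht.mem_Icc (ρ i))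
      (fun i => hε.mem_Icc (ρ i)) (fun i => evenReward_mem_Icc (ρ i)) (indicator_Wpar_mem_Icc ρ)
      hrates ?_
    exact tendsto_survival_zero (fun i => hε.mem_Icc (ρ i)) (hε.2 c hcj).1
      (hc.mono fun i hi => (congrArg ε hi).ge)

end ParityPayoff

/-! ### Local interactions and discounted one-step games -/

section Mean

variable {α β : Type*} [Fintype α] [Fintype β]

/-- The expectation of `f` under the distribution `p` on a finite type. -/
noncomputable def mean (p : PMF α) (f : α → ℝ) : ℝ :=
  ∑ a, (p a).toReal * f a

theorem sum_toReal_eq_one (p : PMF α) : ∑ a, (p a).toReal = 1 := by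
  rw [← ENNReal.toReal_sum fun a _ => p.apply_ne_top a, ← tsum_fintype (L := .unconditional α),
    p.tsum_coe, ENNReal.toReal_one]

theorem mean_mul_add_const (p : PMF α) (f : α → ℝ) (s c : ℝ) :
    mean p (fun a => s * f a + c) = s * mean p f + c := by
  simp only [mean, mul_add, Finset.sum_add_distrib, ← Finset.sum_mul, sum_toReal_eq_one, one_mul,
    Finset.mul_sum, mul_left_comm s]

theorem mean_mul_sub_const (p : PMF α) (f : α → ℝ) (s c : ℝ) :
    mean p (fun a => s * (f a - c)) = s * (mean p f - c) := by
  simpa only [mul_sub, ← sub_eq_add_neg] using mean_mul_add_const p f s (-(s * c))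

theorem mean_mono (p : PMF α) : Monotone (mean p) := fun _ _ h =>
  Finset.sum_le_sum fun a _ => mul_le_mul_of_nonneg_left (h a) ENNReal.toReal_nonneg

theorem mean_const (p : PMF α) (c : ℝ) : mean p (fun _ => c) = c := by
  simpa only [zero_mul, zero_add] using mean_mul_add_const p (fun _ => 0) 0 c

theorem mean_bind (p : PMF α) (κ : α → PMF β) (f : β → ℝ) :
    mean (p.bind κ) f = mean p fun a => mean (κ a) f := by
  have hbind : ∀ b, (p.bind κ b).toReal = ∑ a, (p a).toReal * (κ a b).toReal := fun b => by
    rw [PMF.bind_apply, tsum_fintype, ENNReal.toReal_sum fun a _ =>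
      ENNReal.mul_ne_top (p.apply_ne_top a) ((κ a).apply_ne_top b)]
    simp only [ENNReal.toReal_mul]
  simp only [mean, hbind, Finset.sum_mul, Finset.mul_sum, mul_assoc]
  exact Finset.sum_comm

theorem le_mean_bind {γ : Type*} [Finite γ] (p : PMF γ) {κ : γ → PMF β} {f : β → ℝ} {c : ℝ}
    (h : ∀ a, c ≤ mean (κ a) f) : c ≤ mean (p.bind κ) f := by
  let := Fintype.ofFinite γ
  rw [mean_bind, ← mean_const p c]
  exact mean_mono p h

theorem mean_bind_le {γ : Type*} [Finite γ] (p : PMF γ) {κ : γ → PMF β} {f : β → ℝ} {c : ℝ}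
    (h : ∀ a, mean (κ a) f ≤ c) : mean (p.bind κ) f ≤ c := by
  let := Fintype.ofFinite γ
  rw [mean_bind, ← mean_const p c]
  exact mean_mono p h

end Mean

section Shapley

open scoped NNReal

theorem GFDetermined.exists_saddle {SA SB O : Type u} [Finite SA] [Finite SB] [Nonempty SA]
    [Nonempty SB] {ρ : SA → SB → O} (h : GFDetermined ρ) {α : Type*} [LinearOrder α] (f : O → α) :
    ∃ x, (∃ a, ∀ b, x ≤ f (ρ a b)) ∧ ∃ b, ∀ a, f (ρ a b) ≤ x := by
  choose reply hreply using fun a => Finite.exists_min fun b => f (ρ a b)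
  obtain ⟨a₀, ha₀⟩ := Finite.exists_max fun a => f (ρ a (reply a))
  refine ⟨f (ρ a₀ (reply a₀)), ⟨a₀, hreply a₀⟩, ?_⟩
  rcases h {o | f (ρ a₀ (reply a₀)) < f o} with ⟨a, ha⟩ | ⟨b, hb⟩
  · exact absurd (ha₀ a) (ha (reply a)).not_ge
  · exact ⟨b, fun a => not_lt.1 (hb a)⟩

variable {A B Q D : Type u} [Finite A] [Finite B] [Nonempty A] [Nonempty B] [Fintype Q]
  {δ : Q → A → B → D}

theorem exists_saddle_fixedPoint (hδ : ∀ q, GFDetermined (δ q)) {g : (Q → ℝ) → Q → D → ℝ}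
    {K : ℝ≥0} (hK : K < 1) (hg : ∀ v w q d, g v q d ≤ g w q d + K * dist v w) :
    ∃ (v : Q → ℝ) (sA : Q → A) (sB : Q → B),
      (∀ q b, v q ≤ g v q (δ q (sA q) b)) ∧ ∀ q a, g v q (δ q a (sB q)) ≤ v q := by
  choose T hTA hTB using fun v q => (hδ q).exists_saddle (g v q)
  have hle : ∀ v w q, T v q ≤ T w q + K * dist v w := fun v w q => by
    obtain ⟨a, ha⟩ := hTA v q
    obtain ⟨b, hb⟩ := hTB w q
    calc T v q ≤ g v q (δ q a b) := ha b
      _ ≤ g w q (δ q a b) + K * dist v w := hg v w q _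
      _ ≤ T w q + K * dist v w := by gcongr; exact hb a
  have hT : ContractingWith K T := by
    refine ⟨hK, LipschitzWith.of_dist_le_mul fun v w => ?_⟩
    refine (dist_pi_le_iff (by positivity)).2 fun q => ?_
    rw [Real.dist_eq, abs_sub_le_iff, sub_le_iff_le_add', sub_le_iff_le_add']
    exact ⟨hle v w q, dist_comm v w ▸ hle w v q⟩
  obtain ⟨v, hv, -⟩ := hT.exists_fixedPoint 0 (edist_ne_top _ _)
  choose sA hsA using hTA v
  choose sB hsB using hTB v
  rw [hv.eq] at hsA hsB
  exact ⟨v, sA, sB, hsA, hsB⟩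

/-- The payoff of a step from `q` to `q'` that stops with probability `x q q'` and reward `y q q'`
and otherwise continues with value `v q'`. -/
def backup (x y : Q → Q → ℝ) (v : Q → ℝ) (q q' : Q) : ℝ :=
  x q q' * y q q' + (1 - x q q') * v q'

theorem backup_le_add {x : Q → Q → ℝ} {θ : ℝ} (hθ : ∀ q q', θ ≤ x q q') (hx : ∀ q q', x q q' ≤ 1)
    (y : Q → Q → ℝ) (v w : Q → ℝ) (q q' : Q) :
    backup x y v q q' ≤ backup x y w q q' + (1 - θ) * dist v w := by
  have hdist : v q' - w q' ≤ dist v w := (le_abs_self _).trans (dist_le_pi_dist v w q')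
  calc backup x y v q q' = backup x y w q q' + (1 - x q q') * (v q' - w q') := by
        simp only [backup]; ring
    _ ≤ backup x y w q q' + (1 - x q q') * dist v w := by
        gcongr; exact sub_nonneg.2 (hx q q')
    _ ≤ backup x y w q q' + (1 - θ) * dist v w := by gcongr; exact hθ q q'

theorem exists_saddle_backup (hδ : ∀ q, GFDetermined (δ q)) (law : D → PMF Q) {x : Q → Q → ℝ}
    {θ : ℝ} (hθ₀ : 0 < θ) (hθ : ∀ q q', θ ≤ x q q') (hx : ∀ q q', x q q' ≤ 1) (y : Q → Q → ℝ) :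
    ∃ (v : Q → ℝ) (sA : Q → A) (sB : Q → B),
      (∀ q b, v q ≤ mean (law (δ q (sA q) b)) (backup x y v q)) ∧
        ∀ q a, mean (law (δ q a (sB q))) (backup x y v q) ≤ v q := by
  refine exists_saddle_fixedPoint hδ (K := (1 - θ).toNNReal) (by simpa using hθ₀)
    (g := fun v q d => mean (law d) (backup x y v q)) fun v w q d => ?_
  have hθ₁ : 0 ≤ 1 - θ := sub_nonneg.2 ((hθ q q).trans (hx q q))
  rw [Real.coe_toNNReal _ hθ₁]
  calc mean (law d) (backup x y v q)
      ≤ mean (law d) fun q' => 1 * backup x y w q q' + (1 - θ) * dist v w := by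
        refine mean_mono _ fun q' => ?_
        rw [one_mul]
        exact backup_le_add hθ hx y v w q q'
    _ = mean (law d) (backup x y w q) + (1 - θ) * dist v w := by rw [mean_mul_add_const, one_mul]

end Shapley

/-! ### The measure on plays -/

section Cylinder

variable {Q : Type u}

theorem cyl_ofFn {k : ℕ} (π : Fin k → Q) :
    Cyl (List.ofFn π) = (fun ω (i : Fin k) => ω i) ⁻¹' {π} := by
  ext ω
  simp [Cyl, funext_iff, Fin.forall_iff]

theorem measurableSet_cyl (w : List Q) : MeasurableSet[BorelSeq Q] (Cyl w) :=
  MeasurableSpace.measurableSet_generateFrom ⟨w, rfl⟩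

theorem histOf_snoc {N : ℕ} (π : Fin (N + 1) → Q) (q : Q) (i : Fin N) :
    histOf (Fin.snoc π q : Fin (N + 2) → Q) i.castSucc = histOf π i :=
  congrArg List.ofFn <| funext fun j =>
    Fin.snoc_castSucc (α := fun _ => Q) q π (Fin.castLE (Nat.le_succ_of_le i.isLt.le) j)

theorem histOf_snoc_last {N : ℕ} (π : Fin (N + 1) → Q) (q : Q) :
    histOf (Fin.snoc π q : Fin (N + 2) → Q) (Fin.last N) =
      List.ofFn fun j : Fin N => π j.castSucc :=
  congrArg List.ofFn <| funext fun j => Fin.snoc_castSucc (α := fun _ => Q) q π j.castSucc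

theorem measurable_prefix [Countable Q] (k : ℕ) :
    Measurable[BorelSeq Q, ⊤] fun (ω : ℕ → Q) (i : Fin k) => ω i :=
  @measurable_to_countable' _ _ ⊤ _ (BorelSeq Q) _ fun π => cyl_ofFn π ▸ measurableSet_cyl _

theorem measurable_colorSeq {K : Type u} [Countable Q] [MeasurableSpace K] (col : Q → Q → K) :
    Measurable[BorelSeq Q, MeasurableSpace.pi] (colorSeq col) := by
  let := BorelSeq Q
  refine measurable_pi_lambda _ fun i => ?_
  exact (measurable_from_top (f := fun π : Fin (i + 2) → Q =>
    col (π ⟨i, by omega⟩) (π ⟨i + 1, by omega⟩))).comp (measurable_prefix (i + 2))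

theorem exists_comp_prefix_of_dependsOn {β : Type*} {N : ℕ} {f : (ℕ → Q) → β}
    (hf : DependsOn f (Set.Iic N)) :
    ∃ g : (Fin (N + 1) → Q) → β, ∀ ω, f ω = g fun i => ω i :=
  ⟨fun π => f fun n => π ⟨min n N, by omega⟩, fun ω => hf fun _ hi =>
    congrArg ω (min_eq_left (Set.mem_Iic.1 hi)).symm⟩

theorem dependsOn_apply_succ {β : Type*} {N : ℕ} {f : (ℕ → Q) → Q → β}
    (hf : DependsOn f (Set.Iic N)) : DependsOn (fun ω => f ω (ω (N + 1))) (Set.Iic (N + 1)) :=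
  fun _ _ hω => congr (hf fun i hi => hω i (Nat.le_succ_of_le hi)) (hω (N + 1) Set.self_mem_Iic)

end Cylinder

section PlayMeasure

variable {Q : Type u} {μ : @Measure (ℕ → Q) (BorelSeq Q)}

theorem integrable_of_dependsOn [Finite Q] [IsFiniteMeasure μ] {N : ℕ} {f : (ℕ → Q) → ℝ}
    (hf : DependsOn f (Set.Iic N)) : Integrable f μ := by
  obtain ⟨g, hg⟩ := exists_comp_prefix_of_dependsOn hf
  let : MeasurableSpace (Fin (N + 1) → Q) := ⊤
  rw [funext hg]
  exact (Integrable.of_finite (f := g)).comp_measurable (measurable_prefix (N + 1))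

theorem integral_comp_prefix [Fintype Q] [IsFiniteMeasure μ] {k : ℕ}
    (g : (Fin k → Q) → ℝ) :
    ∫ ω, g (fun i => ω i) ∂μ = ∑ π, μ.real (Cyl (List.ofFn π)) * g π := by
  let : MeasurableSpace (Fin k → Q) := ⊤
  rw [← integral_map (f := g) (measurable_prefix k).aemeasurable
    measurable_from_top.aestronglyMeasurable, integral_fintype .of_finite]
  refine Finset.sum_congr rfl fun π _ => ?_
  rw [smul_eq_mul, map_measureReal_apply (measurable_prefix k) trivial, cyl_ofFn]

/-- `μ` is the law of a play that starts at `q₀` and moves from the current state `q`, after the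
strict history `h`, to a state distributed according to `κ h q`. -/
structure IsPlayMeasure (q₀ : Q) (κ : List Q → Q → PMF Q) (μ : @Measure (ℕ → Q) (BorelSeq Q)) :
    Prop extends IsProbabilityMeasure μ where
  measure_cyl : ∀ (k : ℕ) (π : Fin (k + 1) → Q), μ (Cyl (List.ofFn π)) =
    if π 0 = q₀ then ∏ i : Fin k, κ (histOf π i) (π i.castSucc) (π i.succ) else 0

namespace IsPlayMeasure

variable {q₀ : Q} {κ : List Q → Q → PMF Q}

theorem ae_start (h : IsPlayMeasure q₀ κ μ) : ∀ᵐ ω ∂μ, ω 0 = q₀ := by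
  have := h.toIsProbabilityMeasure
  have hstart : Cyl (List.ofFn fun _ : Fin 1 => q₀) ∈ ae μ :=
    (mem_ae_iff_prob_eq_one (measurableSet_cyl _)).2 <| by rw [h.measure_cyl 0]; simp
  rw [cyl_ofFn] at hstart
  exact mem_of_superset hstart fun ω hω => congrFun hω 0

theorem measure_cyl_snoc (h : IsPlayMeasure q₀ κ μ) {N : ℕ} (π : Fin (N + 1) → Q) (q : Q) :
    μ (Cyl (List.ofFn (Fin.snoc π q : Fin (N + 2) → Q))) =
      μ (Cyl (List.ofFn π)) * κ (List.ofFn fun j : Fin N => π j.castSucc) (π (Fin.last N)) q := by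
  have hcast : ∀ i : Fin (N + 1), (Fin.snoc π q : Fin (N + 2) → Q) i.castSucc = π i :=
    fun i => Fin.snoc_castSucc (α := fun _ => Q) q π i
  have hzero : (Fin.snoc π q : Fin (N + 2) → Q) 0 = π 0 := hcast 0
  rw [h.measure_cyl, h.measure_cyl, Fin.prod_univ_castSucc, hzero, ite_mul, zero_mul]
  simp only [histOf_snoc, histOf_snoc_last, ← Fin.castSucc_succ, hcast, Fin.succ_last,
    Fin.snoc_last]

theorem integral_step [Fintype Q] (h : IsPlayMeasure q₀ κ μ) {N : ℕ} {f : (ℕ → Q) → Q → ℝ}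
    (hf : DependsOn f (Set.Iic N)) :
    ∫ ω, f ω (ω (N + 1)) ∂μ =
      ∫ ω, mean (κ (List.ofFn fun j : Fin N => ω j) (ω N)) (f ω) ∂μ := by
  have := h.toIsProbabilityMeasure
  obtain ⟨g, hg⟩ := exists_comp_prefix_of_dependsOn hf
  simp only [hg]
  calc ∫ ω, g (fun i => ω i) (ω (N + 1)) ∂μ
      = ∑ π : Fin (N + 2) → Q, μ.real (Cyl (List.ofFn π)) * g (Fin.init π) (π (Fin.last _)) :=
        integral_comp_prefix fun π : Fin (N + 2) → Q => g (Fin.init π) (π (Fin.last _))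
    _ = ∑ π : Fin (N + 1) → Q, ∑ q, μ.real (Cyl (List.ofFn (Fin.snoc π q : Fin (N + 2) → Q))) *
          g π q := by
        rw [← (Fin.snocEquiv fun _ => Q).sum_comp, Fintype.sum_prod_type, Finset.sum_comm]
        simp [Fin.snocEquiv]
    _ = ∑ π : Fin (N + 1) → Q, μ.real (Cyl (List.ofFn π)) *
          mean (κ (List.ofFn fun j : Fin N => π j.castSucc) (π (Fin.last N))) (g π) := by
        simp only [mean, Finset.mul_sum, measureReal_def, h.measure_cyl_snoc, ENNReal.toReal_mul,
          mul_assoc]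
    _ = ∫ ω, mean (κ (List.ofFn fun j : Fin N => ω j) (ω N)) (g fun i => ω i) ∂μ :=
        (integral_comp_prefix fun π : Fin (N + 1) → Q =>
          mean (κ (List.ofFn fun j : Fin N => π j.castSucc) (π (Fin.last N))) (g π)).symm

end IsPlayMeasure

end PlayMeasure

section DiscountedPlay

variable {Q : Type} {q₀ : Q} {κ : List Q → Q → PMF Q}
  {μ : @Measure (ℕ → Q) (BorelSeq Q)} {x y : Q → Q → ℝ} {θ : ℝ}

theorem dependsOn_survival_colorSeq (x : Q → Q → ℝ) (N : ℕ) :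
    DependsOn (fun ω => survival (colorSeq x ω) N) (Set.Iic N) := fun _ _ hω =>
  survival_congr fun i hi => congrArg₂ x (hω i hi.le) (hω (i + 1) hi)

theorem dependsOn_stopValue_colorSeq (x y : Q → Q → ℝ) (v : Q → ℝ) (N : ℕ) :
    DependsOn (fun ω => stopValue (colorSeq x ω) (colorSeq y ω) (v (ω N)) N) (Set.Iic N) := by
  intro ω ω' hω
  have hcongr : ∀ z : Q → Q → ℝ, ∀ i < N, colorSeq z ω i = colorSeq z ω' i := fun z i hi =>
    congrArg₂ z (hω i hi.le) (hω (i + 1) hi)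
  simp only [hω N Set.self_mem_Iic]
  exact stopValue_congr (hcongr x) (hcongr y) _

namespace IsPlayMeasure

theorem integral_stopValue_succ [Fintype Q] (h : IsPlayMeasure q₀ κ μ) (x y : Q → Q → ℝ)
    (v : Q → ℝ) (N : ℕ) :
    ∫ ω, stopValue (colorSeq x ω) (colorSeq y ω) (v (ω (N + 1))) (N + 1) ∂μ =
      ∫ ω, stopValue (colorSeq x ω) (colorSeq y ω) (v (ω N)) N ∂μ +
        ∫ ω, survival (colorSeq x ω) N *
          (mean (κ (List.ofFn fun j : Fin N => ω j) (ω N)) (backup x y v (ω N)) - v (ω N)) ∂μ := by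
  have := h.toIsProbabilityMeasure
  have hgain : DependsOn (fun (ω : ℕ → Q) q =>
      survival (colorSeq x ω) N * (backup x y v (ω N) q - v (ω N))) (Set.Iic N) := by
    intro ω ω' hω
    simp only [hω N Set.self_mem_Iic, dependsOn_survival_colorSeq x N hω]
  have hstep := h.integral_step hgain
  simp only [mean_mul_sub_const] at hstep
  rw [← hstep, ← integral_add (integrable_of_dependsOn (dependsOn_stopValue_colorSeq x y v N))
    (integrable_of_dependsOn (dependsOn_apply_succ hgain))]
  exact integral_congr_ae (Eventually.of_forall fun ω => stopValue_succ _ _ _ _ _)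

theorem integral_stopValue_zero (h : IsPlayMeasure q₀ κ μ) (x y : Q → Q → ℝ) (v : Q → ℝ) :
    ∫ ω, stopValue (colorSeq x ω) (colorSeq y ω) (v (ω 0)) 0 ∂μ = v q₀ := by
  have := h.toIsProbabilityMeasure
  simp only [stopValue_zero]
  rw [integral_congr_ae (h.ae_start.mono fun ω hω => congrArg v hω)]
  simp

theorem tendsto_integral_stopValue [Finite Q] (h : IsPlayMeasure q₀ κ μ) (hθ₀ : 0 < θ)
    (hx : ∀ q q', x q q' ∈ Set.Icc θ 1) (hy : ∀ q q', y q q' ∈ Set.Icc 0 1) (v : Q → ℝ)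
    (w : (ℕ → Q) → ℝ) :
    Tendsto (fun N => ∫ ω, stopValue (colorSeq x ω) (colorSeq y ω) (v (ω N)) N ∂μ) atTop
      (𝓝 (∫ ω, stopPayoff (colorSeq x ω) (colorSeq y ω) (w ω) ∂μ)) := by
  have := h.toIsProbabilityMeasure
  obtain ⟨C, hC⟩ : ∃ C, ∀ q, |v q| ≤ C :=
    (Set.finite_range fun q => |v q|).bddAbove.imp fun C hC q => hC ⟨q, rfl⟩
  have hx' : ∀ ω i, colorSeq x ω i ∈ Set.Icc 0 1 := fun ω i =>
    Set.Icc_subset_Icc_left hθ₀.le (hx _ _)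
  have hy' : ∀ ω i, colorSeq y ω i ∈ Set.Icc 0 1 := fun ω i => hy _ _
  refine tendsto_integral_of_dominated_convergence (fun _ => 1 + C)
    (fun N => (integrable_of_dependsOn (dependsOn_stopValue_colorSeq x y v N)).1)
    (integrable_const _) (fun N => ae_of_all μ fun ω => ?_) (ae_of_all μ fun ω => ?_)
  · exact (abs_stopValue_le (hx' ω) (hy' ω) _ N).trans (by gcongr; exact hC _)
  · have hsurvival : Tendsto (survival (colorSeq x ω)) atTop (𝓝 0) :=
      tendsto_survival_zero (hx' ω) hθ₀ (Frequently.of_forall fun i => (hx _ _).1)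
    exact tendsto_stopValue_of_survival_zero (hx' ω) (hy' ω) hsurvival (fun N => hC (ω N)) (w ω)

theorem le_integral_stopPayoff [Fintype Q] (h : IsPlayMeasure q₀ κ μ) (hθ₀ : 0 < θ)
    (hx : ∀ q q', x q q' ∈ Set.Icc θ 1) (hy : ∀ q q', y q q' ∈ Set.Icc 0 1) {v : Q → ℝ}
    (hv : ∀ l q, v q ≤ mean (κ l q) (backup x y v q)) (w : (ℕ → Q) → ℝ) :
    v q₀ ≤ ∫ ω, stopPayoff (colorSeq x ω) (colorSeq y ω) (w ω) ∂μ := by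
  have hmono : Monotone fun N =>
      ∫ ω, stopValue (colorSeq x ω) (colorSeq y ω) (v (ω N)) N ∂μ := by
    refine monotone_nat_of_le_succ fun N => ?_
    rw [h.integral_stopValue_succ]
    refine le_add_of_nonneg_right (integral_nonneg fun ω => mul_nonneg ?_ (sub_nonneg.2 (hv _ _)))
    exact survival_nonneg (fun i => Set.Icc_subset_Icc_left hθ₀.le (hx _ _)) N
  exact (h.integral_stopValue_zero x y v).ge.trans
    (hmono.ge_of_tendsto (h.tendsto_integral_stopValue hθ₀ hx hy v w) 0)

theorem integral_stopPayoff_le [Fintype Q] (h : IsPlayMeasure q₀ κ μ) (hθ₀ : 0 < θ)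
    (hx : ∀ q q', x q q' ∈ Set.Icc θ 1) (hy : ∀ q q', y q q' ∈ Set.Icc 0 1) {v : Q → ℝ}
    (hv : ∀ l q, mean (κ l q) (backup x y v q) ≤ v q) (w : (ℕ → Q) → ℝ) :
    ∫ ω, stopPayoff (colorSeq x ω) (colorSeq y ω) (w ω) ∂μ ≤ v q₀ := by
  have hanti : Antitone fun N =>
      ∫ ω, stopValue (colorSeq x ω) (colorSeq y ω) (v (ω N)) N ∂μ := by
    refine antitone_nat_of_succ_le fun N => ?_
    rw [h.integral_stopValue_succ]
    refine add_le_of_nonpos_right <| integral_nonpos fun ω =>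
      mul_nonpos_of_nonneg_of_nonpos ?_ (sub_nonpos.2 (hv _ _))
    exact survival_nonneg (fun i => Set.Icc_subset_Icc_left hθ₀.le (hx _ _)) N
  exact (hanti.le_of_tendsto (h.tendsto_integral_stopValue hθ₀ hx hy v w) 0).trans
    (h.integral_stopValue_zero x y v).le

end IsPlayMeasure

end DiscountedPlay

/-! ### Positional saddle points -/

section Saddle

variable {A B Q : Type u}

/-- The positional strategy `s`, of either player, as a state strategy. -/
noncomputable def positional (s : Q → A) : List Q → Q → PMF A :=
  fun _ q => PMF.pure (s q)

/-- The positional strategies `sA` and `sB` form a saddle point of the payoff `J`, which Player A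
maximizes and Player B minimizes over all state strategies. -/
def IsPositionalSaddle {α : Type*} [LE α] (J : (List Q → Q → PMF A) → (List Q → Q → PMF B) → α)
    (sA : Q → A) (sB : Q → B) : Prop :=
  ∀ tA tB, J tA (positional sB) ≤ J (positional sA) tB

-- There are finitely many pairs of positional strategies, so one of them is a saddle point along a
-- cofinal set of parameters.
theorem exists_isPositionalSaddle_of_tendsto [Finite A] [Finite B] [Finite Q] {α ι : Type*}
    [TopologicalSpace α] [Preorder α] [OrderClosedTopology α] {l : Filter ι} [l.NeBot]
    {J : ι → (List Q → Q → PMF A) → (List Q → Q → PMF B) → α}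
    {J' : (List Q → Q → PMF A) → (List Q → Q → PMF B) → α}
    (hlim : ∀ tA tB, Tendsto (fun k => J k tA tB) l (𝓝 (J' tA tB)))
    (hJ : ∀ᶠ k in l, ∃ sA sB, IsPositionalSaddle (J k) sA sB) :
    ∃ sA sB, IsPositionalSaddle J' sA sB := by
  obtain ⟨⟨sA, sB⟩, hs⟩ : ∃ s : (Q → A) × (Q → B), ∃ᶠ k in l, IsPositionalSaddle (J k) s.1 s.2 := by
    by_contra! hnot
    obtain ⟨k, ⟨sA, sB, hk⟩, hk'⟩ := (hJ.and (eventually_all.2 hnot)).exists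
    exact hk' (sA, sB) hk
  exact ⟨sA, sB, fun tA tB => le_of_tendsto_of_tendsto_of_frequently (hlim _ _) (hlim _ _)
    (hs.mono fun k hk => hk tA tB)⟩

variable {K : Type u} {col : Q → Q → K}
  {P : (List Q → Q → PMF A) → (List Q → Q → PMF B) → @Measure (ℕ → Q) (BorelSeq Q)}
  {U : Set (ℕ → Q)}

theorem valA_le_valB : valA col P U ≤ valB col P U :=
  iSup_le fun sA => le_iInf fun sB =>
    (iInf_le _ (toStratB col sB)).trans
      (le_iSup (fun tA => P tA (toStratB col sB) U) (toStratA col sA))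

theorem IsPositionalSaddle.determined {sA : Q → A} {sB : Q → B}
    (h : IsPositionalSaddle (fun tA tB => P tA tB U) sA sB) :
    valA col P U = valB col P U ∧ valSA col P U (fun _ q => sA q) = valA col P U ∧
      valSB col P U (fun _ q => sB q) = valB col P U := by
  have hA : valSA col P U (fun _ q => sA q) ≤ valA col P U := le_iSup (valSA col P U) _
  have hB : valB col P U ≤ valSB col P U (fun _ q => sB q) := iInf_le (valSB col P U) _
  have hBA : valSB col P U (fun _ q => sB q) ≤ valSA col P U (fun _ q => sA q) :=
    iSup_le fun tA => le_iInf fun tB => h tA tB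
  have hAB : valA col P U ≤ valB col P U := valA_le_valB
  exact ⟨hAB.antisymm (hB.trans (hBA.trans hA)), hA.antisymm (hAB.trans (hB.trans hBA)),
    (hBA.trans (hA.trans hAB)).antisymm hB⟩

end Saddle

section ParityGame

variable {A B D Q : Type}

/-- The distribution of the successor of `q` when the players use the mixed actions `α` and `β`. -/
noncomputable def stepLaw (δ : Q → A → B → D) (law : D → PMF Q) (α : PMF A) (β : PMF B) (q : Q) :
    PMF Q :=
  α.bind fun a => β.bind fun b => law (δ q a b)

/-- `P tA tB` is the law of the play of the arena when the players use the state strategies `tA`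
and `tB`. -/
def IsGameMeasure (q₀ : Q) (δ : Q → A → B → D) (law : D → PMF Q)
    (P : (List Q → Q → PMF A) → (List Q → Q → PMF B) → @Measure (ℕ → Q) (BorelSeq Q)) : Prop :=
  ∀ tA tB, IsPlayMeasure q₀ (fun h q => stepLaw δ law (tA h q) (tB h q) q) (P tA tB)

/-- The expected parity payoff with stopping rates `ε`. -/
noncomputable def expectedPayoff (col : Q → Q → ℕ)
    (P : (List Q → Q → PMF A) → (List Q → Q → PMF B) → @Measure (ℕ → Q) (BorelSeq Q))
    (ε : ℕ → ℝ) (tA : List Q → Q → PMF A) (tB : List Q → Q → PMF B) : ℝ :=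
  ∫ ω, parityPayoff ε (colorSeq col ω) ∂(P tA tB)

variable {q₀ : Q} {δ : Q → A → B → D} {law : D → PMF Q} {col : Q → Q → ℕ}
  {P : (List Q → Q → PMF A) → (List Q → Q → PMF B) → @Measure (ℕ → Q) (BorelSeq Q)} {ε : ℕ → ℝ}

theorem stepLaw_apply [Fintype A] [Fintype B] (α : PMF A) (β : PMF B) (q q' : Q) :
    stepLaw δ law α β q q' = ∑ a, ∑ b, α a * β b * law (δ q a b) q' := by
  simp only [stepLaw, PMF.bind_apply, tsum_fintype, Finset.mul_sum, mul_assoc]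

theorem le_mean_stepLaw_pure [Finite B] [Fintype Q] {f : Q → ℝ} {c : ℝ} {q : Q} {a : A}
    (h : ∀ b, c ≤ mean (law (δ q a b)) f) (β : PMF B) :
    c ≤ mean (stepLaw δ law (PMF.pure a) β q) f := by
  rw [stepLaw, PMF.pure_bind]
  exact le_mean_bind β h

theorem mean_stepLaw_pure_le [Finite A] [Fintype Q] {f : Q → ℝ} {c : ℝ} {q : Q} {b : B}
    (h : ∀ a, mean (law (δ q a b)) f ≤ c) (α : PMF A) :
    mean (stepLaw δ law α (PMF.pure b) q) f ≤ c := by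
  simp only [stepLaw, PMF.pure_bind]
  exact mean_bind_le α h

theorem finite_range_colorSeq {K : Type} [Finite Q] (col : Q → Q → K) (ω : ℕ → Q) :
    (Set.range (colorSeq col ω)).Finite :=
  (Set.finite_range fun e : Q × Q => col e.1 e.2).subset <| by
    rintro _ ⟨i, rfl⟩
    exact ⟨(ω i, ω (i + 1)), rfl⟩

theorem measurable_parityPayoff_colorSeq [Countable Q] (hε : ∀ c, ε c ∈ Set.Icc 0 1) :
    Measurable[BorelSeq Q] fun ω => parityPayoff ε (colorSeq col ω) := by
  let := BorelSeq Q
  exact (measurable_parityPayoff hε).comp (measurable_colorSeq col)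

theorem exists_isPositionalSaddle_of_discounted [Finite A] [Finite B] [Finite Q] [Nonempty A]
    [Nonempty B] (hδ : ∀ q, GFDetermined (δ q)) (hP : IsGameMeasure q₀ δ law P)
    (hε : DiscountsFrom 0 ε) : ∃ sA sB, IsPositionalSaddle (expectedPayoff col P ε) sA sB := by
  let := Fintype.ofFinite Q
  have : Nonempty Q := ⟨q₀⟩
  obtain ⟨e, he⟩ := Finite.exists_min fun e : Q × Q => ε (col e.1 e.2)
  have hpos : 0 < ε (col e.1 e.2) := (hε.2 _ (Nat.zero_le _)).1
  have hrate : ∀ q q', ε (col q q') ∈ Set.Icc (ε (col e.1 e.2)) 1 := fun q q' =>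
    ⟨he (q, q'), (hε.mem_Icc _).2⟩
  have hreward : ∀ q q', evenReward (col q q') ∈ Set.Icc 0 1 := fun q q' => evenReward_mem_Icc _
  obtain ⟨v, sA, sB, hA, hB⟩ := exists_saddle_backup hδ law hpos (fun q q' => (hrate q q').1)
    (fun q q' => (hrate q q').2) fun q q' => evenReward (col q q')
  refine ⟨sA, sB, fun tA tB => ?_⟩
  calc expectedPayoff col P ε tA (positional sB) ≤ v q₀ :=
        (hP _ _).integral_stopPayoff_le hpos hrate hreward
          (fun l q => mean_stepLaw_pure_le (hB q) (tA l q)) _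
    _ ≤ expectedPayoff col P ε (positional sA) tB :=
        (hP _ _).le_integral_stopPayoff hpos hrate hreward
          (fun l q => le_mean_stepLaw_pure (hA q) (tB l q)) _

theorem tendsto_expectedPayoff_update [Finite Q] (hP : IsGameMeasure q₀ δ law P) {j : ℕ}
    (hε : DiscountsFrom (j + 1) ε) (tA : List Q → Q → PMF A) (tB : List Q → Q → PMF B) :
    Tendsto (fun t => expectedPayoff col P (Function.update ε j t) tA tB) (𝓝[>] 0)
      (𝓝 (expectedPayoff col P ε tA tB)) := by
  have := (hP tA tB).toIsProbabilityMeasure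
  have hrates : ∀ᶠ t in 𝓝[>] (0 : ℝ), ∀ c, Function.update ε j t c ∈ Set.Icc 0 1 :=
    (eventually_mem_set.2 (Ioc_mem_nhdsGT one_pos)).mono fun t ht => (hε.update ht).mem_Icc
  refine tendsto_integral_filter_of_dominated_convergence (fun _ => 1)
    (hrates.mono fun t ht => (measurable_parityPayoff_colorSeq ht).aestronglyMeasurable)
    (hrates.mono fun t ht => ae_of_all _ fun ω => ?_) (integrable_const 1)
    (ae_of_all _ fun ω => tendsto_parityPayoff_update hε (finite_range_colorSeq col ω))
  have hmem := parityPayoff_mem_Icc ht (colorSeq col ω)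
  exact (abs_of_nonneg hmem.1).trans_le hmem.2

theorem exists_isPositionalSaddle_expectedPayoff [Finite A] [Finite B] [Finite Q] [Nonempty A]
    [Nonempty B] (hδ : ∀ q, GFDetermined (δ q)) (hP : IsGameMeasure q₀ δ law P) {j : ℕ}
    (hε : DiscountsFrom j ε) : ∃ sA sB, IsPositionalSaddle (expectedPayoff col P ε) sA sB := by
  induction j generalizing ε with
  | zero => exact exists_isPositionalSaddle_of_discounted hδ hP hε
  | succ j ih =>
    exact exists_isPositionalSaddle_of_tendsto (tendsto_expectedPayoff_update hP hε) <|
      (eventually_mem_set.2 (Ioc_mem_nhdsGT one_pos)).mono fun t ht => ih (hε.update ht)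

theorem expectedPayoff_eq_measureReal [Countable Q] (hε : ∀ q q', ε (col q q') = 0)
    (tA : List Q → Q → PMF A) (tB : List Q → Q → PMF B) :
    expectedPayoff col P ε tA tB = (P tA tB).real (UW col Wpar) := by
  have hU : MeasurableSet[BorelSeq Q] (UW col Wpar) := measurable_colorSeq col measurableSet_Wpar
  rw [← integral_indicator_one hU]
  exact integral_congr_ae <| ae_of_all _ fun ω => parityPayoff_eq_indicator fun i => hε _ _

theorem exists_isPositionalSaddle_Wpar [Finite A] [Finite B] [Finite Q] [Nonempty A] [Nonempty B]
    (hδ : ∀ q, GFDetermined (δ q)) (hP : IsGameMeasure q₀ δ law P) :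
    ∃ sA sB, IsPositionalSaddle (fun tA tB => P tA tB (UW col Wpar)) sA sB := by
  obtain ⟨n, hn⟩ := (Set.finite_range fun e : Q × Q => col e.1 e.2).bddAbove
  obtain ⟨ε, hε⟩ := exists_discountsFrom (n + 1)
  have hzero : ∀ q q', ε (col q q') = 0 := fun q q' =>
    hε.1 _ (Nat.lt_succ_of_le (hn ⟨(q, q'), rfl⟩))
  obtain ⟨sA, sB, hs⟩ := exists_isPositionalSaddle_expectedPayoff (col := col) hδ hP hε
  refine ⟨sA, sB, fun tA tB => ?_⟩
  have := (hP tA (positional sB)).toIsProbabilityMeasure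
  have := (hP (positional sA) tB).toIsProbabilityMeasure
  have hle := hs tA tB
  rw [expectedPayoff_eq_measureReal hzero, expectedPayoff_eq_measureReal hzero] at hle
  exact (ENNReal.toReal_le_toReal (measure_ne_top _ _) (measure_ne_top _ _)).1 hle

end ParityGame

/-- Positional determinacy of finite locally determined stochastic concurrent
parity games: there are positional color strategies `sA`, `sB` that are optimal,
and the values of the two players coincide. Here `P tA tB` is the probability
measure on plays induced by the state strategies `tA, tB`, axiomatized by its
(characterizing) values on cylinder sets. -/
theorem stmt18 {A B Q D : Type}
    [Fintype A] [Fintype B] [Fintype Q] [Fintype D]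
    [Nonempty A] [Nonempty B] [Nonempty Q] [Nonempty D]
    (q0 : Q) (δ : Q → A → B → D) (dist : D → PMF Q) (col : Q → Q → ℕ)
    (m n : ℕ) (hmn : m ≤ n) (hcol : ∀ q q' : Q, col q q' ∈ Finset.Icc m n)
    (hloc : ∀ q : Q, GFDetermined (δ q))
    (P : (List Q → Q → PMF A) → (List Q → Q → PMF B) →
      @Measure (ℕ → Q) (BorelSeq Q))
    (hprob : ∀ tA tB, P tA tB Set.univ = 1)
    (hP : ∀ (tA : List Q → Q → PMF A) (tB : List Q → Q → PMF B)
        (k : ℕ) (π : Fin (k + 1) → Q),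
      P tA tB (Cyl (List.ofFn π)) =
        if π 0 = q0 then
          ∏ i : Fin k, ∑ a : A, ∑ b : B,
            tA (histOf π i) (π i.castSucc) a * tB (histOf π i) (π i.castSucc) b *
              dist (δ (π i.castSucc) a b) (π i.succ)
        else 0) :
    valA col P (UW col Wpar) = valB col P (UW col Wpar) ∧
    (∃ sA : Q → A,
      valSA col P (UW col Wpar) (fun _ q => sA q) = valA col P (UW col Wpar)) ∧
    (∃ sB : Q → B,
      valSB col P (UW col Wpar) (fun _ q => sB q) = valB col P (UW col Wpar)) := by
  have hgame : IsGameMeasure q0 δ dist P := fun tA tB =>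
    { measure_univ := hprob tA tB
      measure_cyl := fun k π => by simp only [hP, stepLaw_apply] }
  obtain ⟨sA, sB, hsaddle⟩ := exists_isPositionalSaddle_Wpar (col := col) hloc hgame
  obtain ⟨hval, hA, hB⟩ := hsaddle.determined (col := col)
  exact ⟨hval, ⟨sA, hA⟩, ⟨sB, hB⟩⟩
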